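/- For an almost hyperHermitian manifold (M, I, J, K, g) the following three conditions are equivalent: (1) M is an HKT-manifold; (2) I dω_I = J dω_J = K dω_K; (3) β_I = β_J = β_K. In particular, condition (2) alone implies the integrability of I, J and K. -/

import Mathlib

/-!  Synthetic (Koszul-style) model of an almost quaternion-Hermitian `4n`-manifold.

`C` plays the role of the commutative ℝ-algebra of smooth functions and `V` that of
the `C`-module of vector fields, equipped with a directional derivative `D`, a Lie
bracket, a Riemannian metric `g` together with its Levi-Civita connection `nab`
(characterised by being torsion-free and metric), a local adapted basis `I, J, K`
of anticommuting almost complex structures with `K = I J`, each compatible with the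
metric, and a (local) orthonormal frame.  -/

noncomputable section

open scoped BigOperators

structure AQH (n : ℕ) (C : Type*) (V : Type*) [CommRing C] [Algebra ℝ C]
    [AddCommGroup V] [Module C V] where
  /-- derivative of a function along a vector field -/
  D : V → C → C
  D_add : ∀ X f g, D X (f + g) = D X f + D X g
  D_mul : ∀ X f g, D X (f * g) = f * D X g + g * D X f
  D_const : ∀ X (r : ℝ), D X (algebraMap ℝ C r) = 0
  D_addX : ∀ X Y f, D (X + Y) f = D X f + D Y f
  D_smulX : ∀ (f : C) (X : V) (h : C), D (f • X) h = f * D X h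
  /-- the Lie bracket of vector fields -/
  bracket : V → V → V
  bracket_skew : ∀ X Y, bracket X Y = -bracket Y X
  bracket_add : ∀ X Y Z, bracket X (Y + Z) = bracket X Y + bracket X Z
  bracket_smul : ∀ X (f : C) Y, bracket X (f • Y) = f • bracket X Y + (D X f) • Y
  bracket_jacobi : ∀ X Y Z,
    bracket X (bracket Y Z) + bracket Y (bracket Z X) + bracket Z (bracket X Y) = 0
  D_bracket : ∀ X Y f, D (bracket X Y) f = D X (D Y f) - D Y (D X f)
  /-- the Riemannian metric -/
  g : V → V → C
  g_symm : ∀ X Y, g X Y = g Y X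
  g_add : ∀ X Y Z, g (X + Y) Z = g X Z + g Y Z
  g_smul : ∀ (f : C) X Y, g (f • X) Y = f * g X Y
  /-- the Levi-Civita connection -/
  nab : V → V → V
  nab_addX : ∀ X Y Z, nab (X + Y) Z = nab X Z + nab Y Z
  nab_smulX : ∀ (f : C) X Y, nab (f • X) Y = f • nab X Y
  nab_add : ∀ X Y Z, nab X (Y + Z) = nab X Y + nab X Z
  nab_leibniz : ∀ X (f : C) Y, nab X (f • Y) = f • nab X Y + (D X f) • Y
  torsion_free : ∀ X Y, nab X Y - nab Y X = bracket X Y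
  nab_metric : ∀ X Y Z, D X (g Y Z) = g (nab X Y) Z + g Y (nab X Z)
  /-- the (local) adapted basis of almost complex structures -/
  I : V → V
  J : V → V
  K : V → V
  I_lin : ∀ (f : C) X Y, I (f • X + Y) = f • I X + I Y
  J_lin : ∀ (f : C) X Y, J (f • X + Y) = f • J X + J Y
  K_lin : ∀ (f : C) X Y, K (f • X + Y) = f • K X + K Y
  I_sq : ∀ X, I (I X) = -X
  J_sq : ∀ X, J (J X) = -X
  K_def : ∀ X, K X = I (J X)
  anticomm : ∀ X, I (J X) = -J (I X)
  I_metric : ∀ X Y, g (I X) (I Y) = g X Y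
  J_metric : ∀ X Y, g (J X) (J Y) = g X Y
  /-- a (local) orthonormal frame -/
  frame : Fin (4 * n) → V
  frame_orthonormal : ∀ i j, g (frame i) (frame j) = if i = j then 1 else 0
  frame_span : ∀ X, X = ∑ i, g X (frame i) • frame i

namespace AQH

section ops

variable {C V : Type*} [CommRing C]

/-- the operator `A_(1)` on covariant 3-tensors -/
def op1 (A : V → V) (ψ : V → V → V → C) : V → V → V → C := fun X Y Z => -ψ (A X) Y Z

/-- the operator `A_(2)` on covariant 3-tensors -/
def op2 (A : V → V) (ψ : V → V → V → C) : V → V → V → C := fun X Y Z => -ψ X (A Y) Z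

/-- the operator `A_(3)` on covariant 3-tensors -/
def op3 (A : V → V) (ψ : V → V → V → C) : V → V → V → C := fun X Y Z => -ψ X Y (A Z)

/-- the operator `A_(12) = A_(1) A_(2)` on covariant 3-tensors -/
def op12 (A : V → V) (ψ : V → V → V → C) : V → V → V → C := fun X Y Z => ψ (A X) (A Y) Z

/-- the operator `A_(13) = A_(1) A_(3)` on covariant 3-tensors -/
def op13 (A : V → V) (ψ : V → V → V → C) : V → V → V → C := fun X Y Z => ψ (A X) Y (A Z)

/-- the operator `A_(23) = A_(2) A_(3)` on covariant 3-tensors -/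
def op23 (A : V → V) (ψ : V → V → V → C) : V → V → V → C := fun X Y Z => ψ X (A Y) (A Z)

/-- the operator `𝓛_A = A_(12) + A_(13) + A_(23)` on three-forms -/
def calL (A : V → V) (ψ : V → V → V → C) : V → V → V → C :=
  fun X Y Z => op12 A ψ X Y Z + op13 A ψ X Y Z + op23 A ψ X Y Z

/-- the action `(A ν)(X) = -ν (A X)` of `A` on a one-form -/
def act1 (A : V → V) (ν : V → C) : V → C := fun X => -ν (A X)

/-- the action `(A ψ)(X,Y,Z) = -ψ(AX,AY,AZ)` of `A` on a three-form -/
def act3 (A : V → V) (ψ : V → V → V → C) : V → V → V → C :=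
  fun X Y Z => -ψ (A X) (A Y) (A Z)

/-- wedge product of two one-forms -/
def wedge11 (α β : V → C) : V → V → C := fun X Y => α X * β Y - α Y * β X

/-- wedge product of a one-form and a two-form -/
def wedge12 (ν : V → C) (ω : V → V → C) : V → V → V → C :=
  fun X Y Z => ν X * ω Y Z - ν Y * ω X Z + ν Z * ω X Y

/-- wedge product of two two-forms -/
def wedge22 (α β : V → V → C) : V → V → V → V → C := fun X Y Z W =>
  α X Y * β Z W - α X Z * β Y W + α X W * β Y Z
    + α Z W * β X Y - α Y W * β X Z + α Y Z * β X W

/-- a (0,3)-tensor is an alternating three-form -/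
def IsAlt3 (T : V → V → V → C) : Prop :=
  (∀ X Y Z, T Y X Z = -T X Y Z) ∧ (∀ X Y Z, T X Z Y = -T X Y Z)

variable [AddCommGroup V] [Module C V]

/-- `C`-linearity (tensoriality) of a three-form in its first argument -/
def Lin3 (T : V → V → V → C) : Prop :=
  ∀ (f : C) X X' Y Z, T (f • X + X') Y Z = f * T X Y Z + T X' Y Z

/-- `C`-linearity (tensoriality) of a one-form -/
def Lin1 (ν : V → C) : Prop := ∀ (f : C) X X', ν (f • X + X') = f * ν X + ν X'

end ops

section derived

variable {n : ℕ} {C V : Type*} [CommRing C] [Algebra ℝ C] [AddCommGroup V] [Module C V]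
  [Module ℝ V] [IsScalarTower ℝ C V]

variable (M : AQH n C V)

/-- the Kähler form `ω_A(X,Y) = g(X, A Y)` -/
def omega (A : V → V) : V → V → C := fun X Y => M.g X (A Y)

/-- `(∇_X A) Y` -/
def nabA (A : V → V) : V → V → V := fun X Y => M.nab X (A Y) - A (M.nab X Y)

/-- covariant derivative of a 2-form: `(∇_X ψ)(Y,Z)` -/
def nab2 (ψ : V → V → C) : V → V → V → C :=
  fun X Y Z => M.D X (ψ Y Z) - ψ (M.nab X Y) Z - ψ Y (M.nab X Z)

/-- covariant derivative of a 4-form -/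
def nab4 (ψ : V → V → V → V → C) : V → V → V → V → V → C :=
  fun X Y Z W U => M.D X (ψ Y Z W U) - ψ (M.nab X Y) Z W U - ψ Y (M.nab X Z) W U
    - ψ Y Z (M.nab X W) U - ψ Y Z W (M.nab X U)

/-- exterior derivative of a one-form -/
def d1 (ν : V → C) : V → V → C :=
  fun X Y => M.D X (ν Y) - M.D Y (ν X) - ν (M.bracket X Y)

/-- exterior derivative of a two-form -/
def d2 (ψ : V → V → C) : V → V → V → C :=
  fun X Y Z => M.D X (ψ Y Z) - M.D Y (ψ X Z) + M.D Z (ψ X Y)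
    - ψ (M.bracket X Y) Z + ψ (M.bracket X Z) Y - ψ (M.bracket Y Z) X

/-- exterior derivative of a four-form -/
def d4 (ψ : V → V → V → V → C) : V → V → V → V → V → C := fun X Y Z W U =>
  M.D X (ψ Y Z W U) - M.D Y (ψ X Z W U) + M.D Z (ψ X Y W U) - M.D W (ψ X Y Z U)
      + M.D U (ψ X Y Z W)
    - ψ (M.bracket X Y) Z W U + ψ (M.bracket X Z) Y W U - ψ (M.bracket X W) Y Z U
      + ψ (M.bracket X U) Y Z W
    - ψ (M.bracket Y Z) X W U + ψ (M.bracket Y W) X Z U - ψ (M.bracket Y U) X Z W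
    - ψ (M.bracket Z W) X Y U + ψ (M.bracket Z U) X Y W
    - ψ (M.bracket W U) X Y Z

/-- the Nijenhuis tensor `N_A(X,Y)` -/
def nijV (A : V → V) : V → V → V := fun X Y =>
  M.bracket X Y + A (M.bracket (A X) Y) + A (M.bracket X (A Y)) - M.bracket (A X) (A Y)

/-- the Nijenhuis `(0,3)`-tensor `N_A(X,Y,Z) = g(X, N_A(Y,Z))` -/
def nij3 (A : V → V) : V → V → V → C := fun X Y Z => M.g X (M.nijV A Y Z)

/-- the induced inner product of two 2-forms,
`⟨ψ,φ⟩ = (1/2!) ψ(e_i,e_j) φ(e_i,e_j)` -/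
def inner2 (ψ φ : V → V → C) : C :=
  (1/2 : ℝ) • ∑ i, ∑ j, ψ (M.frame i) (M.frame j) * φ (M.frame i) (M.frame j)

/-- the contraction `(Λ_A β)(X) = ⟨X ⌟ β, ω_A⟩` of a three-form -/
def Lam (A : V → V) (β : V → V → V → C) : V → C :=
  fun X => (1/2 : ℝ) •
    ∑ i, ∑ j, β X (M.frame i) (M.frame j) * M.omega A (M.frame i) (M.frame j)

/-- `λ_I(X) = (1/2n) ⟨∇_X ω_J, ω_K⟩` -/
def lambdaI : V → C := fun X =>
  (1/(2*(n:ℝ))) • M.inner2 (fun Y Z => M.nab2 (M.omega M.J) X Y Z) (M.omega M.K)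

/-- `λ_J(X) = (1/2n) ⟨∇_X ω_K, ω_I⟩` -/
def lambdaJ : V → C := fun X =>
  (1/(2*(n:ℝ))) • M.inner2 (fun Y Z => M.nab2 (M.omega M.K) X Y Z) (M.omega M.I)

/-- `λ_K(X) = (1/2n) ⟨∇_X ω_I, ω_J⟩` -/
def lambdaK : V → C := fun X =>
  (1/(2*(n:ℝ))) • M.inner2 (fun Y Z => M.nab2 (M.omega M.I) X Y Z) (M.omega M.J)

/-- codifferential of a two-form -/
def codiff2 (ψ : V → V → C) : V → C := fun Z => -∑ i, M.nab2 ψ (M.frame i) (M.frame i) Z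

/-- codifferential of a four-form -/
def codiff4 (ψ : V → V → V → V → C) : V → V → V → C :=
  fun X Y Z => -∑ i, M.nab4 ψ (M.frame i) (M.frame i) X Y Z

/-- `β_I = J dω_J + K dω_K` -/
def betaI : V → V → V → C := fun X Y Z =>
  act3 M.J (M.d2 (M.omega M.J)) X Y Z + act3 M.K (M.d2 (M.omega M.K)) X Y Z

/-- `β_J = K dω_K + I dω_I` -/
def betaJ : V → V → V → C := fun X Y Z =>
  act3 M.K (M.d2 (M.omega M.K)) X Y Z + act3 M.I (M.d2 (M.omega M.I)) X Y Z

/-- `β_K = I dω_I + J dω_J` -/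
def betaK : V → V → V → C := fun X Y Z =>
  act3 M.I (M.d2 (M.omega M.I)) X Y Z + act3 M.J (M.d2 (M.omega M.J)) X Y Z

/-- the intrinsic torsion
`ξ_X Y = -(1/4) Σ_A A (∇_X A) Y + (1/2) Σ_A λ_A(X) A Y` -/
def xi : V → V → V := fun X Y =>
  (-(1/4 : ℝ)) • (M.I (M.nabA M.I X Y) + M.J (M.nabA M.J X Y) + M.K (M.nabA M.K X Y))
    + (1/2 : ℝ) • (M.lambdaI X • M.I Y + M.lambdaJ X • M.J Y + M.lambdaK X • M.K Y)

/-- the one-form `ν^I_4 = I Λ_I β_I` -/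
def nu4I : V → C := act1 M.I (M.Lam M.I M.betaI)

/-- the one-form `ν^J_4 = J Λ_J β_J` -/
def nu4J : V → C := act1 M.J (M.Lam M.J M.betaJ)

/-- the one-form `ν^K_4 = K Λ_K β_K` -/
def nu4K : V → C := act1 M.K (M.Lam M.K M.betaK)

/-- `ν^I_3`, determined by `J Λ_J β_I = (1/(2n-1)) (ν^I_4 + (2n+1)(n-1) ν^I_3)` -/
def nu3I : V → C := fun X =>
  (1/((2*(n:ℝ)+1) * ((n:ℝ)-1))) •
    ((2*(n:ℝ)-1) • act1 M.J (M.Lam M.J M.betaI) X - M.nu4I X)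

/-- `ν^J_3`, determined by `K Λ_K β_J = (1/(2n-1)) (ν^J_4 + (2n+1)(n-1) ν^J_3)` -/
def nu3J : V → C := fun X =>
  (1/((2*(n:ℝ)+1) * ((n:ℝ)-1))) •
    ((2*(n:ℝ)-1) • act1 M.K (M.Lam M.K M.betaJ) X - M.nu4J X)

/-- `ν^K_3`, determined by `I Λ_I β_K = (1/(2n-1)) (ν^K_4 + (2n+1)(n-1) ν^K_3)` -/
def nu3K : V → C := fun X =>
  (1/((2*(n:ℝ)+1) * ((n:ℝ)-1))) •
    ((2*(n:ℝ)-1) • act1 M.I (M.Lam M.I M.betaK) X - M.nu4K X)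

/-- `β^{(E)}_{3I} = -(1/2) Jν^I_3 ∧ ω_J - (1/2) Kν^I_3 ∧ ω_K + (1/(2n-1)) Iν^I_3 ∧ ω_I` -/
def betaE3I : V → V → V → C := fun X Y Z =>
  (-(1/2:ℝ)) • wedge12 (act1 M.J M.nu3I) (M.omega M.J) X Y Z
    + (-(1/2:ℝ)) • wedge12 (act1 M.K M.nu3I) (M.omega M.K) X Y Z
    + (1/(2*(n:ℝ)-1)) • wedge12 (act1 M.I M.nu3I) (M.omega M.I) X Y Z

def betaE3J : V → V → V → C := fun X Y Z =>
  (-(1/2:ℝ)) • wedge12 (act1 M.K M.nu3J) (M.omega M.K) X Y Z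
    + (-(1/2:ℝ)) • wedge12 (act1 M.I M.nu3J) (M.omega M.I) X Y Z
    + (1/(2*(n:ℝ)-1)) • wedge12 (act1 M.J M.nu3J) (M.omega M.J) X Y Z

def betaE3K : V → V → V → C := fun X Y Z =>
  (-(1/2:ℝ)) • wedge12 (act1 M.I M.nu3K) (M.omega M.I) X Y Z
    + (-(1/2:ℝ)) • wedge12 (act1 M.J M.nu3K) (M.omega M.J) X Y Z
    + (1/(2*(n:ℝ)-1)) • wedge12 (act1 M.K M.nu3K) (M.omega M.K) X Y Z

/-- `β_{4I} = -(1/(2n-1)) Iν^I_4 ∧ ω_I` -/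
def beta4I : V → V → V → C := fun X Y Z =>
  (-(1/(2*(n:ℝ)-1))) • wedge12 (act1 M.I M.nu4I) (M.omega M.I) X Y Z

def beta4J : V → V → V → C := fun X Y Z =>
  (-(1/(2*(n:ℝ)-1))) • wedge12 (act1 M.J M.nu4J) (M.omega M.J) X Y Z

def beta4K : V → V → V → C := fun X Y Z =>
  (-(1/(2*(n:ℝ)-1))) • wedge12 (act1 M.K M.nu4K) (M.omega M.K) X Y Z

/-- `β_I^{(3+K)} = β_I - β^{(E)}_{3I} - β_{4I}` -/
def beta3KI : V → V → V → C := fun X Y Z => M.betaI X Y Z - M.betaE3I X Y Z - M.beta4I X Y Z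

def beta3KJ : V → V → V → C := fun X Y Z => M.betaJ X Y Z - M.betaE3J X Y Z - M.beta4J X Y Z

def beta3KK : V → V → V → C := fun X Y Z => M.betaK X Y Z - M.betaE3K X Y Z - M.beta4K X Y Z

/-- `β_I^{(3)} = (1/6) (2 - 𝓛_J - 𝓛_K) β_I^{(3+K)}` -/
def beta3I : V → V → V → C := fun X Y Z =>
  (1/6:ℝ) • ((2:ℝ) • M.beta3KI X Y Z - calL M.J M.beta3KI X Y Z - calL M.K M.beta3KI X Y Z)

def beta3J : V → V → V → C := fun X Y Z =>
  (1/6:ℝ) • ((2:ℝ) • M.beta3KJ X Y Z - calL M.K M.beta3KJ X Y Z - calL M.I M.beta3KJ X Y Z)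

def beta3K : V → V → V → C := fun X Y Z =>
  (1/6:ℝ) • ((2:ℝ) • M.beta3KK X Y Z - calL M.I M.beta3KK X Y Z - calL M.J M.beta3KK X Y Z)

/-- `β_I^{(K)} = (1/6) (4 + 𝓛_J + 𝓛_K) β_I^{(3+K)}` -/
def betaKI : V → V → V → C := fun X Y Z =>
  (1/6:ℝ) • ((4:ℝ) • M.beta3KI X Y Z + calL M.J M.beta3KI X Y Z + calL M.K M.beta3KI X Y Z)

def betaKJ : V → V → V → C := fun X Y Z =>
  (1/6:ℝ) • ((4:ℝ) • M.beta3KJ X Y Z + calL M.K M.beta3KJ X Y Z + calL M.I M.beta3KJ X Y Z)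

def betaKK : V → V → V → C := fun X Y Z =>
  (1/6:ℝ) • ((4:ℝ) • M.beta3KK X Y Z + calL M.I M.beta3KK X Y Z + calL M.J M.beta3KK X Y Z)

/-- the three-form `ψ^{(3)} = (1/12)(β_I^{(3)} + β_J^{(3)} + β_K^{(3)})` determining `ξ_{33}` -/
def psi3 : V → V → V → C := fun X Y Z =>
  (1/12:ℝ) • (M.beta3I X Y Z + M.beta3J X Y Z + M.beta3K X Y Z)

/-- the three-form `ψ^{(K)} = -(1/48)(β_I^{(K)} + β_J^{(K)} + β_K^{(K)})` determining `ξ_{KH}` -/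
def psiK : V → V → V → C := fun X Y Z =>
  (-(1/48:ℝ)) • (M.betaKI X Y Z + M.betaKJ X Y Z + M.betaKK X Y Z)

/-- the three-form `ψ^{(3)}_I` determining `ξ_{3H}` -/
def psi3I : V → V → V → C := fun X Y Z =>
  (-(1/8:ℝ)) • M.beta3I X Y Z
    + (1/48:ℝ) • ((3:ℝ) • (M.beta3I X Y Z + M.beta3J X Y Z + M.beta3K X Y Z)
        + calL M.I (fun a b c => M.beta3I a b c + M.beta3J a b c + M.beta3K a b c) X Y Z)

def psi3J : V → V → V → C := fun X Y Z =>
  (-(1/8:ℝ)) • M.beta3J X Y Z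
    + (1/48:ℝ) • ((3:ℝ) • (M.beta3I X Y Z + M.beta3J X Y Z + M.beta3K X Y Z)
        + calL M.J (fun a b c => M.beta3I a b c + M.beta3J a b c + M.beta3K a b c) X Y Z)

def psi3K : V → V → V → C := fun X Y Z =>
  (-(1/8:ℝ)) • M.beta3K X Y Z
    + (1/48:ℝ) • ((3:ℝ) • (M.beta3I X Y Z + M.beta3J X Y Z + M.beta3K X Y Z)
        + calL M.K (fun a b c => M.beta3I a b c + M.beta3J a b c + M.beta3K a b c) X Y Z)

/-- the three-form `ψ^{(K)}_I` determining `ξ_{K3}` -/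
def psiKI : V → V → V → C := fun X Y Z =>
  (-(1/2:ℝ)) • M.betaKI X Y Z
    + (1/6:ℝ) • (M.betaKI X Y Z + M.betaKJ X Y Z + M.betaKK X Y Z)

def psiKJ : V → V → V → C := fun X Y Z =>
  (-(1/2:ℝ)) • M.betaKJ X Y Z
    + (1/6:ℝ) • (M.betaKI X Y Z + M.betaKJ X Y Z + M.betaKK X Y Z)

def psiKK : V → V → V → C := fun X Y Z =>
  (-(1/2:ℝ)) • M.betaKK X Y Z
    + (1/6:ℝ) • (M.betaKI X Y Z + M.betaKJ X Y Z + M.betaKK X Y Z)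

/-- the one-form `θ^ξ` determining `ξ_{EH}`,
defined by `(6/n)(2n+1)(n-1) θ^ξ(X) = -⟨ξ_{e_i} e_i, X⟩` -/
def thetaXi : V → C := fun X =>
  (-((n:ℝ)/(6*(2*(n:ℝ)+1)*((n:ℝ)-1)))) • ∑ i, M.g (M.xi (M.frame i) (M.frame i)) X

/-- the local one-form `θ^ξ_I`, defined by `(2/n)(2n+1)(n-1) θ^ξ_I(X) = -⟨I ξ_{e_i} I e_i, X⟩` -/
def thetaXiI : V → C := fun X =>
  (-((n:ℝ)/(2*(2*(n:ℝ)+1)*((n:ℝ)-1)))) •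
    ∑ i, M.g (M.I (M.xi (M.frame i) (M.I (M.frame i)))) X

def thetaXiJ : V → C := fun X =>
  (-((n:ℝ)/(2*(2*(n:ℝ)+1)*((n:ℝ)-1)))) •
    ∑ i, M.g (M.J (M.xi (M.frame i) (M.J (M.frame i)))) X

def thetaXiK : V → C := fun X =>
  (-((n:ℝ)/(2*(2*(n:ℝ)+1)*((n:ℝ)-1)))) •
    ∑ i, M.g (M.K (M.xi (M.frame i) (M.K (M.frame i)))) X

/-- `α_I = -λ_I ⊗ g + (1/2)(J_(2) - J_(3)) ∇ω_K` -/
def alphaI : V → V → V → C := fun X Y Z =>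
  -(M.lambdaI X * M.g Y Z)
    + (1/2:ℝ) • (-(M.nab2 (M.omega M.K) X (M.J Y) Z) + M.nab2 (M.omega M.K) X Y (M.J Z))

def alphaJ : V → V → V → C := fun X Y Z =>
  -(M.lambdaJ X * M.g Y Z)
    + (1/2:ℝ) • (-(M.nab2 (M.omega M.I) X (M.K Y) Z) + M.nab2 (M.omega M.I) X Y (M.K Z))

def alphaK : V → V → V → C := fun X Y Z =>
  -(M.lambdaK X * M.g Y Z)
    + (1/2:ℝ) • (-(M.nab2 (M.omega M.J) X (M.I Y) Z) + M.nab2 (M.omega M.J) X Y (M.I Z))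

/-- the one-form `η_I(X) = α_I(e_i; e_i, X)` -/
def etaI : V → C := fun X => ∑ i, M.alphaI (M.frame i) (M.frame i) X

def etaJ : V → C := fun X => ∑ i, M.alphaJ (M.frame i) (M.frame i) X

def etaK : V → C := fun X => ∑ i, M.alphaK (M.frame i) (M.frame i) X

/-- the fundamental four-form `Ω = Σ_A ω_A ∧ ω_A` -/
def Omega4 : V → V → V → V → C := fun X Y Z W =>
  wedge22 (M.omega M.I) (M.omega M.I) X Y Z W
    + wedge22 (M.omega M.J) (M.omega M.J) X Y Z W
    + wedge22 (M.omega M.K) (M.omega M.K) X Y Z W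

/-- the one-form `θ^{d*Ω} = (1/3) Σ_A A Λ_A d*Ω` -/
def thetaDOmega : V → C := fun X =>
  (1/3:ℝ) • (act1 M.I (M.Lam M.I (M.codiff4 M.Omega4)) X
    + act1 M.J (M.Lam M.J (M.codiff4 M.Omega4)) X
    + act1 M.K (M.Lam M.K (M.codiff4 M.Omega4)) X)

/-- the vector-valued torsion: `g(W, T(X,Y)) = T(W,X,Y)` -/
def Tvec (T : V → V → V → C) : V → V → V := fun X Y => ∑ i, T (M.frame i) X Y • M.frame i

/-- the connection `∇ + (1/2) T` associated to a torsion (0,3)-tensor `T` -/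
def nabT (T : V → V → V → C) : V → V → V := fun X Y => M.nab X Y + (1/2:ℝ) • M.Tvec T X Y

/-- a connection is metric -/
def MetricConn (nab' : V → V → V) : Prop :=
  ∀ X Y Z, M.D X (M.g Y Z) = M.g (nab' X Y) Z + M.g Y (nab' X Z)

/-- a connection is quaternionic, with associated local one-forms `γ_I, γ_J, γ_K`:
`∇'_X I = γ_K(X) J - γ_J(X) K`, and cyclically -/
def QuatConn (nab' : V → V → V) (γI γJ γK : V → C) : Prop :=
  (∀ X Y, nab' X (M.I Y) - M.I (nab' X Y) = γK X • M.J Y - γJ X • M.K Y) ∧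
  (∀ X Y, nab' X (M.J Y) - M.J (nab' X Y) = γI X • M.K Y - γK X • M.I Y) ∧
  (∀ X Y, nab' X (M.K Y) - M.K (nab' X Y) = γJ X • M.I Y - γI X • M.J Y)

/-- the HKT condition: `I, J, K` integrable and there is a metric connection
`∇ + (1/2)T` with totally skew torsion making `I, J, K` parallel -/
def IsHKT : Prop :=
  (∀ X Y, M.nijV M.I X Y = 0) ∧ (∀ X Y, M.nijV M.J X Y = 0) ∧
  (∀ X Y, M.nijV M.K X Y = 0) ∧
  ∃ T : V → V → V → C, IsAlt3 T ∧ Lin3 T ∧ M.MetricConn (M.nabT T) ∧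
    (∀ X Y, M.nabT T X (M.I Y) = M.I (M.nabT T X Y)) ∧
    (∀ X Y, M.nabT T X (M.J Y) = M.J (M.nabT T X Y)) ∧
    (∀ X Y, M.nabT T X (M.K Y) = M.K (M.nabT T X Y))

/-- membership of a three-form in `KH`: type `{2,1}` for each `A` and `Λ_A ψ = 0` -/
def InKH3 (ψ : V → V → V → C) : Prop :=
  IsAlt3 ψ ∧ Lin3 ψ ∧
  calL M.I ψ = ψ ∧ calL M.J ψ = ψ ∧ calL M.K ψ = ψ ∧
  M.Lam M.I ψ = 0 ∧ M.Lam M.J ψ = 0 ∧ M.Lam M.K ψ = 0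

/-- the `(0,3)`-tensor of the `KH`-component of the torsion determined by `ψ^{(K)}`:
`3ψ - Σ_A A_(23) ψ` -/
def xiKH3 (ψ : V → V → V → C) : V → V → V → C := fun X Y Z =>
  (3:ℝ) • ψ X Y Z - (op23 M.I ψ X Y Z + op23 M.J ψ X Y Z + op23 M.K ψ X Y Z)

/-- the `(0,3)`-tensor of the `EH`-component of the torsion determined by the
one-form `θ`: `3 e_i ⊗ e_i ∧ θ - Σ_A (e_i ⊗ A e_i ∧ A θ + (2/n) A θ ⊗ ω_A)` -/
def xiEH3 (θ : V → C) : V → V → V → C := fun X Y Z =>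
  (3:ℝ) • ∑ i, M.g (M.frame i) X *
      (M.g (M.frame i) Y * θ Z - M.g (M.frame i) Z * θ Y)
  - ((∑ i, M.g (M.frame i) X *
        (M.g (M.I (M.frame i)) Y * act1 M.I θ Z - M.g (M.I (M.frame i)) Z * act1 M.I θ Y))
    + (∑ i, M.g (M.frame i) X *
        (M.g (M.J (M.frame i)) Y * act1 M.J θ Z - M.g (M.J (M.frame i)) Z * act1 M.J θ Y))
    + (∑ i, M.g (M.frame i) X *
        (M.g (M.K (M.frame i)) Y * act1 M.K θ Z - M.g (M.K (M.frame i)) Z * act1 M.K θ Y)))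
  - (2/(n:ℝ)) • (act1 M.I θ X * M.omega M.I Y Z + act1 M.J θ X * M.omega M.J Y Z
      + act1 M.K θ X * M.omega M.K Y Z)

/-- the intrinsic torsion lies in `(K+E)H`: it is the sum of a `KH`-tensor and an
`EH`-tensor as described in §3 of the paper -/
def inKEH : Prop :=
  ∃ (ψ : V → V → V → C) (θ : V → C), M.InKH3 ψ ∧ Lin1 θ ∧
    ∀ X Y Z, M.g Y (M.xi X Z) = M.xiKH3 ψ X Y Z + M.xiEH3 θ X Y Z

end derived

end AQH

namespace AQH

section proof9

variable {n : ℕ} {C V : Type*} [CommRing C] [Algebra ℝ C] [AddCommGroup V] [Module C V]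

/-- a `C`-linear compatible almost complex structure -/
structure Acs9 (M : AQH n C V) (A : V → V) : Prop where
  lin : ∀ (f : C) X Y, A (f • X + Y) = f • A X + A Y
  sq : ∀ X, A (A X) = -X
  met : ∀ X Y, M.g (A X) (A Y) = M.g X Y

theorem Acs9.zero {M : AQH n C V} {A : V → V} (h : Acs9 M A) : A 0 = 0 := by
  simpa using h.lin 1 0 0

theorem Acs9.neg {M : AQH n C V} {A : V → V} (h : Acs9 M A) (X : V) : A (-X) = -A X := by
  simpa [h.zero] using h.lin (-1) X 0

theorem Acs9.add {M : AQH n C V} {A : V → V} (h : Acs9 M A) (X Y : V) :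
    A (X + Y) = A X + A Y := by
  simpa using h.lin 1 X Y

theorem Acs9.smul {M : AQH n C V} {A : V → V} (h : Acs9 M A) (f : C) (X : V) :
    A (f • X) = f • A X := by
  simpa [h.zero] using h.lin f X 0

theorem Acs9.sub {M : AQH n C V} {A : V → V} (h : Acs9 M A) (X Y : V) :
    A (X - Y) = A X - A Y := by
  rw [sub_eq_add_neg, h.add, h.neg, ← sub_eq_add_neg]

variable (M : AQH n C V)

theorem acsI : Acs9 M M.I := ⟨M.I_lin, M.I_sq, M.I_metric⟩

theorem acsJ : Acs9 M M.J := ⟨M.J_lin, M.J_sq, M.J_metric⟩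

theorem acsK : Acs9 M M.K := by
  refine ⟨M.K_lin, fun X => ?_, fun X Y => ?_⟩
  · rw [M.K_def, M.K_def, M.anticomm X, (acsJ M).neg, (acsI M).neg, M.J_sq, (acsI M).neg, neg_neg, M.I_sq]
  · rw [M.K_def, M.K_def, M.I_metric, M.J_metric]

theorem JI9 (X : V) : M.J (M.I X) = -M.I (M.J X) := by rw [M.anticomm, neg_neg]

/-- cyclic rotation of the adapted basis -/
def rot9 : AQH n C V :=
  { M with
    I := M.J
    J := M.K
    K := M.I
    I_lin := M.J_lin
    J_lin := M.K_lin
    K_lin := M.I_lin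
    I_sq := M.J_sq
    J_sq := (acsK M).sq
    K_def := fun X => by rw [M.K_def, JI9, M.J_sq, (acsI M).neg, neg_neg]
    anticomm := fun X => by
      rw [M.K_def, M.K_def, JI9, M.J_sq]
    I_metric := M.J_metric
    J_metric := (acsK M).met }

theorem g_zero9 (X : V) : M.g 0 X = 0 := by simpa using M.g_smul 0 0 X

theorem g_neg9 (X Y : V) : M.g (-X) Y = -M.g X Y := by simpa using M.g_smul (-1) X Y

theorem g_sub9 (X Y Z : V) : M.g (X - Y) Z = M.g X Z - M.g Y Z := by
  rw [sub_eq_add_neg, M.g_add, g_neg9, ← sub_eq_add_neg]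

theorem g_addr9 (X Y Z : V) : M.g X (Y + Z) = M.g X Y + M.g X Z := by
  rw [M.g_symm, M.g_add, M.g_symm Y, M.g_symm Z]

theorem g_smulr9 (f : C) (X Y : V) : M.g X (f • Y) = f * M.g X Y := by
  rw [M.g_symm, M.g_smul, M.g_symm Y]

theorem g_negr9 (X Y : V) : M.g X (-Y) = -M.g X Y := by
  rw [M.g_symm, g_neg9, M.g_symm Y]

theorem g_subr9 (X Y Z : V) : M.g X (Y - Z) = M.g X Y - M.g X Z := by
  rw [M.g_symm, g_sub9, M.g_symm Y, M.g_symm Z]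

theorem g_zeror9 (X : V) : M.g X 0 = 0 := by rw [M.g_symm, g_zero9]

theorem nondeg9 (X : V) (h : ∀ Z, M.g Z X = 0) : X = 0 := by
  rw [M.frame_span X]
  refine Finset.sum_eq_zero fun i _ => ?_
  rw [M.g_symm, h, zero_smul]

theorem D_zero9 (X : V) : M.D X 0 = 0 := by simpa using M.D_const X 0

theorem D_neg9 (X : V) (f : C) : M.D X (-f) = -M.D X f := by
  have := M.D_add X f (-f)
  rw [add_neg_cancel, D_zero9] at this
  linear_combination -this

theorem Acs9.skew {M : AQH n C V} {A : V → V} (h : Acs9 M A) (X Y : V) :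
    M.g (A X) Y = -M.g X (A Y) := by
  rw [← h.met X (A Y), h.sq, g_negr9, neg_neg]

theorem nab_zeroX9 (X : V) : M.nab 0 X = 0 := by simpa using M.nab_smulX 0 0 X

theorem nab_negX9 (X Y : V) : M.nab (-X) Y = -M.nab X Y := by
  simpa using M.nab_smulX (-1) X Y

theorem nab_zero9 (X : V) : M.nab X 0 = 0 := by
  simpa using M.nab_add X 0 0

theorem nab_neg9 (X Y : V) : M.nab X (-Y) = -M.nab X Y := by
  have := M.nab_add X Y (-Y)
  rw [add_neg_cancel, nab_zero9] at this
  exact (neg_eq_of_add_eq_zero_right this.symm).symm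

/-- `a_A(X;Y,Z) = g(Y,(∇_X A)Z) = (∇_X ω_A)(Y,Z)` -/
def a9 (A : V → V) (X Y Z : V) : C := M.g Y (M.nabA A X Z)

section
variable {M}
variable {A : V → V}

theorem a9_skew (h : Acs9 M A) (X Y Z : V) : M.a9 A X Z Y = -M.a9 A X Y Z := by
  have h1 := M.nab_metric X Y (A Z)
  have h2 := M.nab_metric X (A Y) Z
  rw [h.skew Y Z, D_neg9] at h2
  have h3 := h.skew Y (M.nab X Z)
  have h4 := h.skew Z (M.nab X Y)
  have h5 := h.skew (M.nab X Y) Z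
  simp only [a9, nabA, g_subr9]
  rw [M.g_symm Z (M.nab X (A Y)), M.g_symm Z (A (M.nab X Y))]
  linear_combination -h1 - h2 - h3 - h5

theorem a9_move (h : Acs9 M A) (X Y Z : V) : M.a9 A X (A Y) Z = M.a9 A X Y (A Z) := by
  simp only [a9, nabA]
  rw [h.skew, h.sub, h.sq, h.sq, nab_neg9, ← g_negr9]
  congr 1
  abel

theorem a9_linX (h : Acs9 M A) (f : C) (X X' Y Z : V) :
    M.a9 A (f • X + X') Y Z = f * M.a9 A X Y Z + M.a9 A X' Y Z := by
  simp only [a9, nabA, M.nab_addX, M.nab_smulX, h.lin, g_subr9, g_addr9, g_smulr9]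
  ring

theorem a9_linY (f : C) (X Y Y' Z : V) :
    M.a9 A X (f • Y + Y') Z = f * M.a9 A X Y Z + M.a9 A X Y' Z := by
  simp only [a9, M.g_add, M.g_smul]

theorem a9_linZ (h : Acs9 M A) (f : C) (X Y Z Z' : V) :
    M.a9 A X Y (f • Z + Z') = f * M.a9 A X Y Z + M.a9 A X Y Z' := by
  rw [a9_skew h, a9_linY, a9_skew h X Z Y, a9_skew h X Z' Y]
  ring

theorem a9_negX (h : Acs9 M A) (X Y Z : V) : M.a9 A (-X) Y Z = -M.a9 A X Y Z := by
  have h0 := a9_linX h 1 0 0 Y Z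
  have h1 := a9_linX h (-1) X 0 Y Z
  simp at h0 h1
  rw [h1, h0]; simp

theorem a9_negY (X Y Z : V) : M.a9 A X (-Y) Z = -M.a9 A X Y Z := by
  simp only [a9, g_neg9]

theorem a9_negZ (h : Acs9 M A) (X Y Z : V) : M.a9 A X Y (-Z) = -M.a9 A X Y Z := by
  rw [a9_skew h, a9_negY, a9_skew h X Z Y]

theorem d2_eq9 (h : Acs9 M A) (X Y Z : V) :
    M.d2 (M.omega A) X Y Z = M.a9 A X Y Z + M.a9 A Y Z X + M.a9 A Z X Y := by
  have h1 := M.nab_metric X Y (A Z)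
  have h2 := M.nab_metric Y X (A Z)
  have h3 := M.nab_metric Z X (A Y)
  have e1 := a9_skew h Y Z X
  simp only [d2, omega, ← M.torsion_free, g_sub9]
  rw [h1, h2, h3]
  simp only [a9, nabA, g_subr9] at e1 ⊢
  have q : ∀ U W, M.g W (A U) + M.g U (A W) = 0 := by
    intro U W
    rw [M.g_symm W, h.skew, neg_add_cancel]
  linear_combination -e1 + q (M.nab X Z) Y + q (M.nab Z Y) X - q (M.nab Y Z) X

theorem nij_eq9 (h : Acs9 M A) (X Y Z : V) :
    M.nij3 A Z X Y = M.a9 A X Y (A Z) + M.a9 A Y (A Z) X + M.a9 A (A X) Y Z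
      + M.a9 A (A Y) Z X := by
  rw [a9_skew h X (A Z) Y, a9_skew h (A X) Z Y]
  simp only [nij3, nijV, a9, nabA, ← M.torsion_free]
  rw [h.skew, h.skew, ← g_negr9, ← g_negr9, ← g_negr9, ← g_negr9, ← g_addr9, ← g_addr9,
    ← g_addr9]
  congr 1
  simp only [h.sub, h.sq]
  abel

end

theorem a9_K (X Y Z : V) : M.a9 M.K X Y Z = M.a9 M.I X Y (M.J Z) - M.a9 M.J X (M.I Y) Z := by
  simp only [a9, nabA]
  rw [(acsI M).skew, sub_neg_eq_add, ← g_addr9, (acsI M).sub, M.K_def, M.K_def]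
  congr 1
  abel

theorem two_cancel9 {x : C} (h : 2 * x = 0) : x = 0 := by
  have e : algebraMap ℝ C (1/2) * 2 = 1 := by
    rw [← map_ofNat (algebraMap ℝ C) 2, ← map_mul]; norm_num
  linear_combination algebraMap ℝ C (1/2) * h - x * e

theorem hitchin9 (X Y Z : V) :
    M.nij3 M.I (M.J Z) X Y = -(M.d2 (M.omega M.J) X Y Z - M.d2 (M.omega M.J) (M.I X) (M.I Y) Z
      - M.d2 (M.omega M.K) (M.I X) Y Z - M.d2 (M.omega M.K) X (M.I Y) Z) := by
  have hI := acsI M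
  have hJ := acsJ M
  have mI := a9_move hI
  have mJ := a9_move hJ
  have mIJ : ∀ X Y Z, M.a9 M.J X (M.I (M.J Y)) Z = -M.a9 M.J X (M.I Y) (M.J Z) := by
    intro X Y Z
    rw [← mJ, JI9, a9_negY, neg_neg]
  have r : ∀ X Y Z, M.a9 M.I X (M.J Y) Z
      = M.a9 M.I X Y (M.J Z) - M.a9 M.J X (M.I Y) Z + M.a9 M.J X Y (M.I Z) := by
    intro X Y Z
    have e := a9_skew (acsK M) X Y Z
    rw [a9_K, a9_K, a9_skew hI X (M.J Y) Z, a9_skew hJ X Y (M.I Z)] at e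
    linear_combination -e
  rw [nij_eq9 hI]
  simp only [r, d2_eq9 hJ, d2_eq9 (acsK M), a9_K, JI9, M.I_sq, M.J_sq, mI, mJ, mIJ,
    hI.neg, hJ.neg, a9_negX hI, a9_negX hJ, a9_negY, a9_negZ hI, a9_negZ hJ, neg_neg]
  ring

theorem d2_alt9 {A : V → V} (h : Acs9 M A) : IsAlt3 (M.d2 (M.omega A)) := by
  refine ⟨fun X Y Z => ?_, fun X Y Z => ?_⟩ <;>
  · rw [d2_eq9 h, d2_eq9 h, a9_skew h X Z Y, a9_skew h Y X Z, a9_skew h Z Y X]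
    ring

theorem act_alt9 {A : V → V} (h : Acs9 M A) : IsAlt3 (act3 A (M.d2 (M.omega A))) := by
  obtain ⟨h1, h2⟩ := d2_alt9 M h
  exact ⟨fun X Y Z => by simp only [act3, h1 (A X)], fun X Y Z => by
    simp only [act3, h2 (A X) (A Y)]⟩

theorem act_lin9 {A : V → V} (h : Acs9 M A) : Lin3 (act3 A (M.d2 (M.omega A))) := by
  intro f X X' Y Z
  simp only [act3, d2_eq9 h, h.lin, a9_linX h, a9_linY, a9_linZ h]
  ring

theorem Lin3.neg9 {T : V → V → V → C} (h : Lin3 T) (X Y Z : V) : T (-X) Y Z = -T X Y Z := by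
  have h0 := h 1 0 0 Y Z
  have h1 := h (-1) X 0 Y Z
  simp at h0 h1
  rw [h1, h0]; simp

theorem neg2_9 {T : V → V → V → C} (h : Lin3 T) (ha : IsAlt3 T) (X Y Z : V) :
    T X (-Y) Z = -T X Y Z := by
  rw [ha.1, h.neg9, ha.1 X Y, neg_neg]

theorem neg3_9 {T : V → V → V → C} (h : Lin3 T) (ha : IsAlt3 T) (X Y Z : V) :
    T X Y (-Z) = -T X Y Z := by
  rw [ha.2, neg2_9 h ha, ha.2 X Z]

/-- `dω_A = T(A,A,A)` when `T = A dω_A` -/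
theorem d2_of_T9 {A : V → V} (h : Acs9 M A) {T : V → V → V → C}
    (hT : T = act3 A (M.d2 (M.omega A))) (X Y Z : V) :
    M.d2 (M.omega A) X Y Z = T (A X) (A Y) (A Z) := by
  subst hT
  simp only [act3, h.sq, d2_eq9 h, a9_negX h, a9_negY, a9_negZ h]
  ring

/-- key algebraic step: `T` has type (2,1) with respect to `I`, and `I` is integrable -/
theorem key9 {T : V → V → V → C} (hI : T = act3 M.I (M.d2 (M.omega M.I)))
    (hJ : T = act3 M.J (M.d2 (M.omega M.J))) (hK : T = act3 M.K (M.d2 (M.omega M.K))) :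
    (∀ X Y Z, calL M.I T X Y Z = T X Y Z) ∧ (∀ X Y Z, M.nij3 M.I X Y Z = 0) := by
  have aI := acsI M
  have aJ := acsJ M
  have lT : Lin3 T := by rw [hI]; exact act_lin9 M aI
  have altT : IsAlt3 T := by rw [hI]; exact act_alt9 M aI
  have n1 := lT.neg9
  have n2 := neg2_9 lT altT
  have n3 := neg3_9 lT altT
  obtain ⟨P, hP⟩ : ∃ P : V → V → V → C, ∀ X Y Z, P X Y Z = T X Y Z - calL M.I T X Y Z :=
    ⟨_, fun _ _ _ => rfl⟩
  have p1 : ∀ X Y Z, P (-X) Y Z = -P X Y Z := by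
    intro X Y Z; simp only [hP, calL, op12, op13, op23, aI.neg, n1, n2, n3]; ring
  have p2 : ∀ X Y Z, P X (-Y) Z = -P X Y Z := by
    intro X Y Z; simp only [hP, calL, op12, op13, op23, aI.neg, n1, n2, n3]; ring
  have p3 : ∀ X Y Z, P X Y (-Z) = -P X Y Z := by
    intro X Y Z; simp only [hP, calL, op12, op13, op23, aI.neg, n1, n2, n3]; ring
  have pc : ∀ X Y Z, P Y Z X = P X Y Z := by
    have tc : ∀ X Y Z, T Y Z X = T X Y Z := by
      intro X Y Z; rw [altT.2 Y X Z, altT.1 X Y Z, neg_neg]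
    intro X Y Z; simp only [hP, calL, op12, op13, op23]
    rw [tc X Y Z, tc X (M.I Y) (M.I Z), tc (M.I X) (M.I Y) Z, tc (M.I X) Y (M.I Z)]; ring
  have hN0 : ∀ X Y Z, M.nij3 M.I (M.J Z) X Y = -P (M.J X) (M.J Y) (M.J Z) := by
    intro X Y Z
    rw [hitchin9]
    simp only [d2_of_T9 M aJ hJ, d2_of_T9 M (acsK M) hK, hP, calL, op12, op13, op23, M.K_def,
      JI9, aI.neg, M.I_sq, n1, n2, neg_neg]
    ring
  have hN : ∀ X Y Z, M.nij3 M.I Z X Y = -P (M.J X) (M.J Y) Z := by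
    intro X Y Z
    have := hN0 X Y (-M.J Z)
    rwa [aJ.neg, M.J_sq, neg_neg] at this
  have hS : ∀ X Y Z, M.nij3 M.I Z X Y + M.nij3 M.I X Y Z + M.nij3 M.I Y Z X = P X Y Z := by
    intro X Y Z
    have e0 := d2_of_T9 M aI hI (M.I X) (M.I Y) (M.I Z)
    have e1 := d2_of_T9 M aI hI (M.I X) Y Z
    have e2 := d2_of_T9 M aI hI X (M.I Y) Z
    have e3 := d2_of_T9 M aI hI X Y (M.I Z)
    simp only [d2_eq9 aI, M.I_sq, n1, n2, n3, a9_move aI, a9_negZ aI] at e0 e1 e2 e3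
    simp only [nij_eq9 aI, a9_move aI, hP, calL, op12, op13, op23]
    linear_combination -e0 + e1 + e2 + e3
  have hL : ∀ X Y Z, P X Y Z
      = -(P (M.J X) (M.J Y) Z + P X (M.J Y) (M.J Z) + P (M.J X) Y (M.J Z)) := by
    intro X Y Z
    rw [← hS X Y Z, hN, hN, hN, pc X (M.J Y) (M.J Z), ← pc (M.J X) Y (M.J Z),
      ← pc Y (M.J Z) (M.J X)]
    ring
  have hP0 : ∀ X Y Z, P X Y Z = 0 := by
    intro X Y Z
    have e0 := hL X Y Z
    have e1 := hL (M.J X) (M.J Y) Z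
    have e2 := hL X (M.J Y) (M.J Z)
    have e3 := hL (M.J X) Y (M.J Z)
    simp only [M.J_sq, p1, p2, p3] at e1 e2 e3
    apply two_cancel9
    apply two_cancel9
    linear_combination e0 + e1 + e2 + e3
  refine ⟨fun X Y Z => ?_, fun X Y Z => ?_⟩
  · have := hP X Y Z
    rw [hP0] at this
    linear_combination this
  · rw [hN, hP0, neg_zero]

/-- Kobayashi–Nomizu type formula -/
theorem kn9 {A : V → V} (h : Acs9 M A) {T : V → V → V → C} (lT : Lin3 T) (altT : IsAlt3 T)
    (hT : T = act3 A (M.d2 (M.omega A))) (hL : ∀ X Y Z, calL A T X Y Z = T X Y Z)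
    (hN : ∀ X Y Z, M.nij3 A X Y Z = 0) (X Y Z : V) :
    2 * M.a9 A X Y Z = T X (A Y) Z + T X Y (A Z) := by
  have n1 := lT.neg9
  have n2 := neg2_9 lT altT
  have n3 := neg3_9 lT altT
  have e1 := d2_of_T9 M h hT X Y Z
  have e2 := d2_of_T9 M h hT X (A Y) (A Z)
  have e3 := hL (A X) Y Z
  have e4 := hN (A X) Y Z
  rw [nij_eq9 h] at e4
  simp only [d2_eq9 h, calL, op12, op13, op23, h.sq, a9_move h, a9_negZ h, a9_negY, n1, n2, n3]
    at e1 e2 e3 e4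
  linear_combination e1 - e2 + e4 + e3

variable [Module ℝ V] [IsScalarTower ℝ C V]

theorem Lin3.sum9 {T : V → V → V → C} (lT : Lin3 T) {ι : Type*} (s : Finset ι) (c : ι → C)
    (e : ι → V) (X Y : V) : T (∑ i ∈ s, c i • e i) X Y = ∑ i ∈ s, c i * T (e i) X Y := by
  classical
  induction s using Finset.induction_on with
  | empty =>
    have h0 := lT 1 0 0 X Y
    simp at h0
    simpa using h0
  | insert a s ha ih => rw [Finset.sum_insert ha, lT, ih, Finset.sum_insert ha]

theorem g_sum9 {ι : Type*} (s : Finset ι) (Z : V) (e : ι → V) :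
    M.g Z (∑ i ∈ s, e i) = ∑ i ∈ s, M.g Z (e i) := by
  classical
  induction s using Finset.induction_on with
  | empty => simp [g_zeror9]
  | insert a s ha ih => rw [Finset.sum_insert ha, g_addr9, ih, Finset.sum_insert ha]

theorem g_Tvec9 {T : V → V → V → C} (lT : Lin3 T) (X Y Z : V) :
    M.g Z (M.Tvec T X Y) = T Z X Y := by
  conv_rhs => rw [M.frame_span Z, lT.sum9]
  rw [Tvec, g_sum9]
  refine Finset.sum_congr rfl fun i _ => ?_
  rw [g_smulr9, mul_comm]

theorem g_nabT9 {T : V → V → V → C} (lT : Lin3 T) (X Y Z : V) :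
    M.g Z (M.nabT T X Y) = M.g Z (M.nab X Y) + algebraMap ℝ C (1/2) * T Z X Y := by
  rw [nabT, g_addr9, ← algebraMap_smul C (1/2 : ℝ) (M.Tvec T X Y), g_smulr9, g_Tvec9 M lT]

theorem half9 : algebraMap ℝ C (1/2) * 2 = 1 := by
  rw [← map_ofNat (algebraMap ℝ C) 2, ← map_mul]; norm_num

theorem par_iff9 {A : V → V} (h : Acs9 M A) {T : V → V → V → C} (lT : Lin3 T)
    (altT : IsAlt3 T) :
    (∀ X Y, M.nabT T X (A Y) = A (M.nabT T X Y)) ↔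
      ∀ X Y Z, 2 * M.a9 A X Y Z = T X (A Y) Z + T X Y (A Z) := by
  have key : ∀ X Y Z, 2 * M.g Y (M.nabT T X (A Z) - A (M.nabT T X Z))
      = 2 * M.a9 A X Y Z - (T X (A Y) Z + T X Y (A Z)) := by
    intro X Y Z
    have s := h.skew Y (M.nabT T X Z)
    have s' := h.skew Y (M.nab X Z)
    have t1 := altT.1 X Y (A Z)
    have t2 := altT.1 X (A Y) Z
    have hh := half9 (C := C)
    rw [g_nabT9 M lT] at s
    rw [g_subr9, g_nabT9 M lT, a9, nabA, g_subr9, t1]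
    rw [t2] at s
    linear_combination -2 * s + 2 * s' - (T X Y (A Z) + T X (A Y) Z) * hh
  constructor
  · intro hp X Y Z
    have := key X Y Z
    rw [hp, sub_self, g_zeror9] at this
    linear_combination -this
  · intro hp X Y
    refine sub_eq_zero.1 (M.nondeg9 _ fun Z => two_cancel9 ?_)
    rw [key, hp, sub_self]

theorem metric9 {T : V → V → V → C} (lT : Lin3 T) (altT : IsAlt3 T) :
    M.MetricConn (M.nabT T) := by
  intro X Y Z
  have t1 := altT.1 X Y Z
  have t2 := altT.1 X Z Y
  have t3 := altT.2 X Y Z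
  rw [M.g_symm (M.nabT T X Y) Z, g_nabT9 M lT, g_nabT9 M lT, M.nab_metric,
    M.g_symm (M.nab X Y) Z, t1, t2, t3]
  ring

/-- the torsion of a connection with skew torsion preserving integrable `A` is `A dω_A` -/
theorem T_of_par9 {A : V → V} (h : Acs9 M A) {T : V → V → V → C} (lT : Lin3 T)
    (altT : IsAlt3 T) (hN : ∀ X Y, M.nijV A X Y = 0)
    (hp : ∀ X Y, M.nabT T X (A Y) = A (M.nabT T X Y)) :
    act3 A (M.d2 (M.omega A)) = T := by
  have hp' := (par_iff9 M h lT altT).1 hp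
  have n1 := lT.neg9
  have n2 := neg2_9 lT altT
  have n3 := neg3_9 lT altT
  have tc : ∀ X Y Z, T Y Z X = T X Y Z := by
    intro X Y Z; rw [altT.2 Y X Z, altT.1 X Y Z, neg_neg]
  funext X Y Z
  have hn : M.nij3 A Z X Y = 0 := by rw [nij3, hN, g_zeror9]
  rw [nij_eq9 h] at hn
  have e1 := hp' X Y (A Z)
  have e2 := hp' Y (A Z) X
  have e3 := hp' (A X) Y Z
  have e4 := hp' (A Y) Z X
  have d1 := hp' (A X) (A Y) (A Z)
  have d2' := hp' (A Y) (A Z) (A X)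
  have d3 := hp' (A Z) (A X) (A Y)
  have c1 := tc X Y Z
  have c2 := tc X (A Y) (A Z)
  have c5 := tc (A Y) (A Z) X
  have c6 := tc Y (A Z) (A X)
  simp only [h.sq, n1, n2, n3] at e1 e2 e3 e4 d1 d2' d3
  simp only [act3, d2_eq9 h]
  refine sub_eq_zero.1 (two_cancel9 ?_)
  linear_combination 2 * hn - (e1 + e2 + e3 + e4) - (d1 + d2' + d3)
    + c1 + c2 + c5 + c6

theorem main9 {T : V → V → V → C} (hI : T = act3 M.I (M.d2 (M.omega M.I)))
    (hJ : T = act3 M.J (M.d2 (M.omega M.J))) (hK : T = act3 M.K (M.d2 (M.omega M.K))) :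
    M.IsHKT := by
  have lT : Lin3 T := by rw [hI]; exact act_lin9 M (acsI M)
  have altT : IsAlt3 T := by rw [hI]; exact act_alt9 M (acsI M)
  obtain ⟨lI, nI⟩ := key9 M hI hJ hK
  obtain ⟨lJ, nJ⟩ := key9 (rot9 M) hJ hK hI
  obtain ⟨lK, nK⟩ := key9 (rot9 (rot9 M)) hK hI hJ
  exact ⟨fun X Y => M.nondeg9 _ fun Z => nI Z X Y, fun X Y => M.nondeg9 _ fun Z => nJ Z X Y,
    fun X Y => M.nondeg9 _ fun Z => nK Z X Y, T, altT, lT, metric9 M lT altT,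
    (par_iff9 M (acsI M) lT altT).2 (kn9 M (acsI M) lT altT hI lI nI),
    (par_iff9 M (acsJ M) lT altT).2 (kn9 M (acsJ M) lT altT hJ lJ nJ),
    (par_iff9 M (acsK M) lT altT).2 (kn9 M (acsK M) lT altT hK lK nK)⟩

theorem iff9 : M.IsHKT ↔
      (act3 M.I (M.d2 (M.omega M.I)) = act3 M.J (M.d2 (M.omega M.J)) ∧
       act3 M.J (M.d2 (M.omega M.J)) = act3 M.K (M.d2 (M.omega M.K))) := by
  constructor
  · rintro ⟨nI, nJ, nK, T, altT, lT, -, pI, pJ, pK⟩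
    rw [T_of_par9 M (acsI M) lT altT nI pI, T_of_par9 M (acsJ M) lT altT nJ pJ,
      T_of_par9 M (acsK M) lT altT nK pK]
    exact ⟨rfl, rfl⟩
  · rintro ⟨h1, h2⟩
    exact main9 M rfl h1 (h1.trans h2)

theorem beta_iff9 : (M.betaI = M.betaJ ∧ M.betaJ = M.betaK) ↔
      (act3 M.I (M.d2 (M.omega M.I)) = act3 M.J (M.d2 (M.omega M.J)) ∧
       act3 M.J (M.d2 (M.omega M.J)) = act3 M.K (M.d2 (M.omega M.K))) := by
  simp only [funext_iff, betaI, betaJ, betaK]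
  constructor
  · rintro ⟨h1, h2⟩
    exact ⟨fun X Y Z => by linear_combination -h1 X Y Z,
      fun X Y Z => by linear_combination -h2 X Y Z⟩
  · rintro ⟨h1, h2⟩
    exact ⟨fun X Y Z => by linear_combination -h1 X Y Z,
      fun X Y Z => by linear_combination -h2 X Y Z⟩

end proof9

end AQH

open AQH in
/-- For an almost hyperHermitian manifold `(M, I, J, K, g)` the
following are equivalent: (1) `M` is HKT; (2) `I dω_I = J dω_J = K dω_K`;
(3) `β_I = β_J = β_K`.  In particular, condition (2) alone implies the
integrability of `I`, `J` and `K`. -/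
theorem statement9 {n : ℕ} {C V : Type*} [CommRing C] [Algebra ℝ C] [AddCommGroup V]
    [Module C V] [Module ℝ V] [IsScalarTower ℝ C V] (M : AQH n C V) :
    (M.IsHKT ↔
      (act3 M.I (M.d2 (M.omega M.I)) = act3 M.J (M.d2 (M.omega M.J)) ∧
       act3 M.J (M.d2 (M.omega M.J)) = act3 M.K (M.d2 (M.omega M.K)))) ∧
    (M.IsHKT ↔ (M.betaI = M.betaJ ∧ M.betaJ = M.betaK)) ∧
    ((act3 M.I (M.d2 (M.omega M.I)) = act3 M.J (M.d2 (M.omega M.J)) ∧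
      act3 M.J (M.d2 (M.omega M.J)) = act3 M.K (M.d2 (M.omega M.K))) →
      (∀ X Y, M.nijV M.I X Y = 0) ∧ (∀ X Y, M.nijV M.J X Y = 0) ∧
      (∀ X Y, M.nijV M.K X Y = 0)) := by
  exact ⟨M.iff9, M.iff9.trans M.beta_iff9.symm, fun h => ⟨(M.iff9.2 h).1, (M.iff9.2 h).2.1, (M.iff9.2 h).2.2.1⟩⟩
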